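/- Landau's theorem: the Gamma function is a germinating function. Precisely: for every δ > 0 there exists a Lebesgue-measurable set S ⊆ (0,∞) with Lebesgue measure less than δ such that any f : (0,∞) → ℝ satisfying the gamma functional identities with f(x) = Γ(x) for all x ∈ S satisfies f(x) = Γ(x) for all x > 0. -/

import Mathlib

open MeasureTheory

/-!
Legendre's duplication formula determines `f x` from `f (x / 2)` and `f (x / 2 + 1 / 2)`; iterating
it `a` times determines `f x` from the values of `f` at the `M = 2 ^ a` points `(x + j) / M`, which
arise from `x` in `(0, 1]` by prepending a digit `j` to its base `M` expansion. Prescribing `f` on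
`(0, 1 / M]` takes care of the digit `0`, so it remains to prescribe `f` at the points whose first
`N` digits are all nonzero, a set of measure `(1 - 1 / M) ^ N`. This determines `f` on `(0, 1]`.
Since `1` is a repelling fixed point of `x ↦ M * x - (M - 1)`, prescribing `f` on
`(1, 1 + 1 / M]` as well determines `f` on all of `(0, ∞)`. The three sets together are as small as
we please.
-/

open Set
open scoped ENNReal

/-- `A` contains a positive `x` as soon as it contains the arguments `(x + j) / M` on the right-hand
side of Gauss's multiplication formula of order `M`. This is the property of the set where two
solutions of such a formula agree; order `2` is Legendre's duplication formula. -/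
def IsGaussClosed (M : ℕ) (A : Set ℝ) : Prop :=
  ∀ ⦃x : ℝ⦄, 0 < x → (∀ j : ℕ, j < M → (x + j) / M ∈ A) → x ∈ A

/-- The points of `(0, 1]` whose first `N` digits in base `M` are nonzero. The digit of `x` is the
`j` with `x ∈ (j / M, (j + 1) / M]`, so that expansions ending in zeros do not occur. -/
def nonzeroDigits (M : ℕ) : ℕ → Set ℝ
  | 0 => Ioc 0 1
  | N + 1 => ⋃ j ∈ Finset.Ico 1 M, (fun x : ℝ => M * x - j) ⁻¹' nonzeroDigits M N

/-- The values on this set determine a solution of the multiplication formula of order `M` on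
`(0, ∞)`. The set is small when `M` is large and then `N` is large depending on `M`. -/
def gaussSeed (M N : ℕ) : Set ℝ :=
  Ioc 0 (1 / M : ℝ) ∪ Ioc 1 (1 + 1 / M : ℝ) ∪ nonzeroDigits M N

section Measure

variable (M N : ℕ)

lemma measurableSet_nonzeroDigits : MeasurableSet (nonzeroDigits M N) := by
  induction N with
  | zero => exact measurableSet_Ioc
  | succ N ih => exact Finset.measurableSet_biUnion _ fun j _ => ih.preimage (by fun_prop)

lemma nonzeroDigits_subset_Ioc : nonzeroDigits M N ⊆ Ioc 0 1 := by
  induction N with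
  | zero => exact subset_rfl
  | succ N ih =>
    refine iUnion₂_subset fun j hj x hx => ?_
    obtain ⟨hlow, hupp⟩ : 0 < M * x - j ∧ M * x - j ≤ 1 := ih hx
    have hjM : (j : ℝ) + 1 ≤ M := mod_cast (Finset.mem_Ico.mp hj).2
    have hM : (0 : ℝ) < M := mod_cast (Nat.zero_le j).trans_lt (Finset.mem_Ico.mp hj).2
    have hMx : 0 < M * x := j.cast_nonneg.trans_lt (sub_pos.mp hlow)
    exact ⟨pos_of_mul_pos_right hMx hM.le,
      le_of_mul_le_mul_left (by linarith : M * x ≤ M * 1) hM⟩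

lemma volume_preimage_mul_sub {a : ℝ} (ha : a ≠ 0) (b : ℝ) (s : Set ℝ) :
    volume ((fun x : ℝ => a * x - b) ⁻¹' s) = ENNReal.ofReal |a⁻¹| * volume s := by
  calc volume ((fun x : ℝ => a * x - b) ⁻¹' s)
      = volume ((a * ·) ⁻¹' ((· + -b) ⁻¹' s)) := by simp only [preimage_preimage, sub_eq_add_neg]
    _ = ENNReal.ofReal |a⁻¹| * volume s := by
      rw [Real.volume_preimage_mul_left ha, measure_preimage_add_right]

lemma volume_nonzeroDigits_le :
    volume (nonzeroDigits M N) ≤ (((M - 1 : ℕ) : ℝ≥0∞) / M) ^ N := by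
  induction N with
  | zero => simp [nonzeroDigits]
  | succ N ih =>
    have hbranch : ∀ j ∈ Finset.Ico 1 M,
        volume ((fun x : ℝ => M * x - j) ⁻¹' nonzeroDigits M N)
          = (M : ℝ≥0∞)⁻¹ * volume (nonzeroDigits M N) := by
      intro j hj
      have hM : (0 : ℝ) < M := mod_cast (Nat.zero_le j).trans_lt (Finset.mem_Ico.mp hj).2
      rw [volume_preimage_mul_sub hM.ne', abs_of_pos (inv_pos.mpr hM), ENNReal.ofReal_inv_of_pos hM,
        ENNReal.ofReal_natCast]
    calc volume (nonzeroDigits M (N + 1))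
        ≤ ∑ j ∈ Finset.Ico 1 M, volume ((fun x : ℝ => M * x - j) ⁻¹' nonzeroDigits M N) :=
          measure_biUnion_finset_le _ _
      _ = ((M - 1 : ℕ) : ℝ≥0∞) / M * volume (nonzeroDigits M N) := by
          rw [Finset.sum_congr rfl hbranch, Finset.sum_const, Nat.card_Ico, nsmul_eq_mul,
            ← mul_assoc, ← div_eq_mul_inv]
      _ ≤ (((M - 1 : ℕ) : ℝ≥0∞) / M) ^ (N + 1) := by
          rw [pow_succ']
          gcongr

lemma measurableSet_gaussSeed : MeasurableSet (gaussSeed M N) :=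
  (measurableSet_Ioc.union measurableSet_Ioc).union (measurableSet_nonzeroDigits M N)

lemma gaussSeed_subset_Ioi : gaussSeed M N ⊆ Ioi 0 :=
  union_subset (union_subset (fun _ hx => hx.1) fun _ hx => one_pos.trans hx.1)
    fun _ hx => (nonzeroDigits_subset_Ioc M N hx).1

lemma volume_gaussSeed_le :
    volume (gaussSeed M N) ≤ ENNReal.ofReal (2 / M) + (((M - 1 : ℕ) : ℝ≥0∞) / M) ^ N := by
  refine (measure_union_le _ _).trans (add_le_add ?_ (volume_nonzeroDigits_le M N))
  calc volume (Ioc 0 (1 / M : ℝ) ∪ Ioc 1 (1 + 1 / M : ℝ))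
      ≤ volume (Ioc 0 (1 / M : ℝ)) + volume (Ioc 1 (1 + 1 / M : ℝ)) := measure_union_le _ _
    _ = ENNReal.ofReal (2 / M) := by
      rw [Real.volume_Ioc, Real.volume_Ioc, sub_zero, add_sub_cancel_left,
        ← ENNReal.ofReal_add (by positivity) (by positivity), ← add_div, one_add_one_eq_two]

end Measure

lemma exists_volume_gaussSeed_lt {M : ℕ} (hM : 0 < M) {δ : ℝ} (hδ : 2 / M < δ) :
    ∃ N : ℕ, volume (gaussSeed M N) < ENNReal.ofReal δ := by
  have hratio : ((M - 1 : ℕ) : ℝ≥0∞) / M < 1 := by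
    refine ENNReal.div_lt_of_lt_mul ?_
    rw [one_mul]
    exact_mod_cast Nat.sub_one_lt hM.ne'
  have hlim : Filter.Tendsto
      (fun N : ℕ => ENNReal.ofReal (2 / M) + (((M - 1 : ℕ) : ℝ≥0∞) / M) ^ N)
      Filter.atTop (nhds (ENNReal.ofReal (2 / M))) := by
    simpa only [add_zero] using
      (ENNReal.tendsto_pow_atTop_nhds_zero_of_lt_one hratio).const_add (ENNReal.ofReal (2 / M))
  have hδ' : ENNReal.ofReal (2 / M) < ENNReal.ofReal δ :=
    (ENNReal.ofReal_lt_ofReal_iff_of_nonneg (by positivity)).mpr hδ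
  obtain ⟨N, hN⟩ := (hlim.eventually_lt_const hδ').exists
  exact ⟨N, (volume_gaussSeed_le M N).trans_lt hN⟩

namespace IsGaussClosed

variable {K M : ℕ} {A : Set ℝ}

lemma mul (hK : IsGaussClosed K A) (hM : IsGaussClosed M A) : IsGaussClosed (K * M) A := by
  intro x hx hxA
  refine hK hx fun j hj => ?_
  have hK0 : (0 : ℝ) < K := mod_cast (Nat.zero_le j).trans_lt hj
  refine hM (by positivity) fun i hi => ?_
  have hdigit : j + K * i < K * M := by nlinarith
  have hM0 : (0 : ℝ) < M := mod_cast (Nat.zero_le i).trans_lt hi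
  convert hxA (j + K * i) hdigit using 1
  push_cast
  field_simp
  ring

lemma pow (hM : IsGaussClosed M A) (a : ℕ) : IsGaussClosed (M ^ a) A := by
  induction a with
  | zero => exact fun x _ hxA => by simpa using hxA 0 (by simp)
  | succ a ih => exact ih.mul hM

lemma Ioc_zero_one_subset (hA : IsGaussClosed M A) (hzero : Ioc 0 (1 / M : ℝ) ⊆ A) {N : ℕ}
    (hN : nonzeroDigits M N ⊆ A) : Ioc 0 1 ⊆ A := by
  induction N with
  | zero => exact hN
  | succ N ih =>
    refine ih fun x hx => ?_
    obtain ⟨hx0, hx1⟩ := nonzeroDigits_subset_Ioc M N hx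
    refine hA hx0 fun j hj => ?_
    have hM : (0 : ℝ) < M := mod_cast (Nat.zero_le j).trans_lt hj
    rcases j.eq_zero_or_pos with rfl | hj0
    · refine hzero ⟨by positivity, ?_⟩
      rw [Nat.cast_zero, add_zero]
      gcongr
    · refine hN (mem_iUnion₂.mpr ⟨j, Finset.mem_Ico.mpr ⟨hj0, hj⟩, ?_⟩)
      rwa [mem_preimage, mul_div_cancel₀ _ hM.ne', add_sub_cancel_right]

lemma Ioc_one_add_mul_subset (hA : IsGaussClosed M A) {s : ℝ} (hs : Ioc 0 (1 + s) ⊆ A) :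
    Ioc 0 (1 + M * s) ⊆ A := by
  rintro x ⟨hx0, hx⟩
  refine hA hx0 fun j hj => hs ?_
  have hM : (0 : ℝ) < M := mod_cast (Nat.zero_le j).trans_lt hj
  have hjM : (j : ℝ) + 1 ≤ M := mod_cast hj
  refine ⟨by positivity, (div_le_iff₀ hM).mpr ?_⟩
  linarith

lemma Ioi_zero_subset (hA : IsGaussClosed M A) (hM : 1 < M) {s : ℝ} (hs : 0 < s)
    (hsA : Ioc 0 (1 + s) ⊆ A) : Ioi 0 ⊆ A := by
  have hiter : ∀ n : ℕ, Ioc 0 (1 + (M : ℝ) ^ n * s) ⊆ A := by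
    intro n
    induction n with
    | zero => simpa using hsA
    | succ n ih =>
      rw [pow_succ', mul_assoc]
      exact hA.Ioc_one_add_mul_subset ih
  intro x hx
  obtain ⟨n, hn⟩ := pow_unbounded_of_one_lt (x / s) (by exact_mod_cast hM : (1 : ℝ) < M)
  refine hiter n ⟨hx, ?_⟩
  linarith [(div_lt_iff₀ hs).mp hn]

lemma Ioi_zero_subset_of_gaussSeed_subset (hA : IsGaussClosed M A) (hM : 1 < M) {N : ℕ}
    (hseed : gaussSeed M N ⊆ A) : Ioi 0 ⊆ A := by
  obtain ⟨hIoc, hdigits⟩ := union_subset_iff.mp hseed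
  obtain ⟨hzero, hone⟩ := union_subset_iff.mp hIoc
  refine hA.Ioi_zero_subset hM (s := 1 / M) (by positivity) ?_
  rw [← Ioc_union_Ioc_eq_Ioc zero_le_one (by simp)]
  exact union_subset (hA.Ioc_zero_one_subset hzero hdigits) hone

end IsGaussClosed

theorem exists_volume_lt_forall_isGaussClosed {M : ℕ} (hM : 1 < M) {δ : ℝ} (hδ : 0 < δ) :
    ∃ S : Set ℝ, MeasurableSet S ∧ S ⊆ Ioi 0 ∧ volume S < ENNReal.ofReal δ ∧
      ∀ A : Set ℝ, IsGaussClosed M A → S ⊆ A → Ioi 0 ⊆ A := by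
  obtain ⟨a, ha⟩ := pow_unbounded_of_one_lt (max 1 (2 / δ)) (Nat.one_lt_cast.mpr hM)
  obtain ⟨hone, htwo⟩ := max_lt_iff.mp ha
  have hpow : 1 < M ^ a := mod_cast hone
  have hpowδ : 2 / ((M ^ a : ℕ) : ℝ) < δ := by
    rw [Nat.cast_pow]
    exact (div_lt_comm₀ hδ (one_pos.trans hone)).mp htwo
  obtain ⟨N, hvol⟩ := exists_volume_gaussSeed_lt (one_pos.trans hpow) hpowδ
  exact ⟨gaussSeed (M ^ a) N, measurableSet_gaussSeed _ _, gaussSeed_subset_Ioi _ _, hvol,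
    fun A hA => (hA.pow a).Ioi_zero_subset_of_gaussSeed_subset hpow⟩

lemma isGaussClosed_two_setOf_eq {c : ℝ} (hc : c ≠ 0) {w f g : ℝ → ℝ}
    (hf : ∀ x : ℝ, 0 < x → c * f x = w x * f (x / 2) * f (x / 2 + 1 / 2))
    (hg : ∀ x : ℝ, 0 < x → c * g x = w x * g (x / 2) * g (x / 2 + 1 / 2)) :
    IsGaussClosed 2 {x | f x = g x} := by
  intro x hx hfg
  have hhalf : f (x / 2) = g (x / 2) := by simpa using hfg 0 two_pos
  have hhalf' : f (x / 2 + 1 / 2) = g (x / 2 + 1 / 2) := by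
    simpa [add_div] using hfg 1 one_lt_two
  refine mul_left_cancel₀ hc ?_
  rw [hf x hx, hg x hx, hhalf, hhalf']

lemma sqrt_pi_mul_Gamma (x : ℝ) :
    √Real.pi * Real.Gamma x
      = 2 ^ (x - 1) * Real.Gamma (x / 2) * Real.Gamma (x / 2 + 1 / 2) := by
  have hpow : (2 : ℝ) ^ (x - 1) * 2 ^ (1 - x) = 1 := by
    rw [← Real.rpow_add two_pos, sub_add_sub_cancel, sub_self, Real.rpow_zero]
  rw [mul_assoc, Real.Gamma_mul_Gamma_add_half, mul_div_cancel₀ x two_ne_zero]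
  linear_combination -(Real.Gamma x * √Real.pi) * hpow

theorem landau_germinating_general (δ : ℝ) (hδ : 0 < δ) :
    ∃ S : Set ℝ, MeasurableSet S ∧ S ⊆ Ioi 0 ∧ volume S < ENNReal.ofReal δ ∧
      ∀ f : ℝ → ℝ,
        (∀ x : ℝ, 0 < x → √Real.pi * f x = 2 ^ (x - 1) * f (x / 2) * f (x / 2 + 1 / 2)) →
        (∀ x ∈ S, f x = Real.Gamma x) →
        ∀ x : ℝ, 0 < x → f x = Real.Gamma x := by
  obtain ⟨S, hmeas, hpos, hvol, hgen⟩ := exists_volume_lt_forall_isGaussClosed one_lt_two hδ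
  refine ⟨S, hmeas, hpos, hvol, fun f hdup hS => hgen {x | f x = Real.Gamma x} ?_ hS⟩
  exact isGaussClosed_two_setOf_eq (by positivity) hdup fun x _ => sqrt_pi_mul_Gamma x

/-- Landau's theorem: the Gamma function is a germinating function. For every `δ > 0`
there is a measurable set `S ⊆ (0,∞)` of Lebesgue measure less than `δ` such that any
`f : (0,∞) → ℝ` satisfying the gamma functional identities and agreeing with `Γ` on `S`
agrees with `Γ` on all of `(0,∞)`. -/
theorem landau_germinating (δ : ℝ) (hδ : 0 < δ) :
    ∃ S : Set ℝ, MeasurableSet S ∧ S ⊆ Set.Ioi 0 ∧ volume S < ENNReal.ofReal δ ∧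
      ∀ f : ℝ → ℝ,
        (∀ x : ℝ, 0 < x → f (x + 1) = x * f x) →
        (∀ x : ℝ, 0 < x →
          Real.sqrt Real.pi * f x = (2 : ℝ) ^ (x - 1) * f (x / 2) * f (x / 2 + 1 / 2)) →
        (∀ x : ℝ, 0 < x → x < 1 → f x * f (1 - x) = Real.pi / Real.sin (Real.pi * x)) →
        (∀ x ∈ S, f x = Real.Gamma x) →
        ∀ x : ℝ, 0 < x → f x = Real.Gamma x := by
  obtain ⟨S, hmeas, hpos, hvol, hdet⟩ := landau_germinating_general δ hδ
  exact ⟨S, hmeas, hpos, hvol, fun f _ hdup _ => hdet f hdup⟩
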